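/- Let K = C_{(13,3)}(4₁) be the (13,3)-cable of the figure-eight knot, with normalized colored Jones polynomial J_{K,n} defined via Habiro's formula and the cabling formula (with r = 13, s = 3). For every integer n ≥ 1, the function ℏ ↦ J_{K,n}(e^{ℏ}) (defined for small real ℏ ≠ 0 by the quotient J̃_{K,n}(e^{ℏ/4})/J̃_{U,n}(e^{ℏ/4}) and extended real-analytically across ℏ = 0) has Taylor expansion at ℏ = 0 equal to J_{K,n}(e^{ℏ}) = 1 + (47 − 47n²)ℏ² + (−624 + 624n²)ℏ³ + (151919/12 − 14605n² + (23341/12)n⁴)ℏ⁴ + (−294528 + 361088n² − 66560n⁴)ℏ⁵ + (2864712407/360 − (122607733/12)n² + (28027787/12)n⁴ − (27314027/360)n⁶)ℏ⁶ + O(ℏ⁷). In particular, the coefficient of ℏ and every ℏ-coefficient up to order 6 is a polynomial in n of degree at most the order of ℏ. -/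

import Mathlib

/-- Habiro's formula for the normalized colored Jones polynomial of the figure-eight knot:
`J_{4₁,m}(q) = Σ_{k=0}^{|m|−1} Π_{j=1}^{k} (q^m + q^{−m} − q^j − q^{−j})`. -/
noncomputable def J41 (q : ℝ) (m : ℤ) : ℝ :=
  ∑ k ∈ Finset.range m.natAbs, ∏ j ∈ Finset.Icc 1 k,
    (q ^ m + q ^ (-m) - q ^ (j : ℤ) - q ^ (-(j : ℤ)))

/-- The unnormalized colored Jones polynomial of the figure-eight knot (with `t⁴ = q`):
`J̃_{4₁,m}(t) = ((t^{2m} − t^{−2m})/(t² − t^{−2})) · J_{4₁,m}(t⁴)`. -/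
noncomputable def Jtilde41 (t : ℝ) (m : ℤ) : ℝ :=
  (t ^ (2 * m) - t ^ (-(2 * m))) / (t ^ (2 : ℤ) - t ^ (-2 : ℤ)) * J41 (t ^ (4 : ℤ)) m

/-- The 0-framed unknot normalization `J̃_{U,n}(t) = (t^{2n} − t^{−2n})/(t² − t^{−2})`. -/
noncomputable def JtildeU (t : ℝ) (n : ℤ) : ℝ :=
  (t ^ (2 * n) - t ^ (-(2 * n))) / (t ^ (2 : ℤ) - t ^ (-2 : ℤ))

/-- The cabling formula for the unnormalized colored Jones polynomial of the
`(r,s)`-cable of the figure-eight knot: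
`J̃_{K,n}(t) = t^{−rs(n²−1)} Σ_w t^{4rw(sw+1)} J̃_{4₁,2sw+1}(t)`, where `w` runs over
`{−(n−1)/2, −(n−1)/2 + 1, …, (n−1)/2}`.  Writing `u = 2w = 2j − (n−1)` for `j = 0, …, n−1`,
the exponent is `4rw(sw+1) = rsu² + 2ru` and the color is `2sw + 1 = su + 1`. -/
noncomputable def JtildeCable (r s : ℤ) (t : ℝ) (n : ℤ) : ℝ :=
  t ^ (-(r * s * (n ^ 2 - 1))) *
    ∑ j ∈ Finset.range n.toNat,
      t ^ (r * s * (2 * (j : ℤ) - (n - 1)) ^ 2 + 2 * r * (2 * (j : ℤ) - (n - 1))) *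
        Jtilde41 t (s * (2 * (j : ℤ) - (n - 1)) + 1)

/-- The normalized colored Jones polynomial of the `(r,s)`-cable of the figure-eight knot,
evaluated at `q = e^ℏ` (that is, `t = e^{ℏ/4}`):
`J_{K,n}(e^ℏ) = J̃_{K,n}(e^{ℏ/4}) / J̃_{U,n}(e^{ℏ/4})`. -/
noncomputable def JCable (r s : ℤ) (n : ℤ) (h : ℝ) : ℝ :=
  JtildeCable r s (Real.exp (h / 4)) n / JtildeU (Real.exp (h / 4)) n


open Finset Asymptotics Topology Filter

/-- `f` has Taylor coefficients `a 0, …, a 7` at `0`. -/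
def Ex (f : ℝ → ℝ) (a : ℕ → ℝ) : Prop :=
  (fun h => f h - ∑ i ∈ range 8, a i * h ^ i) =O[𝓝 0] fun h : ℝ => h ^ 8

/-- Cauchy product of coefficient sequences. -/
def mulc (a b : ℕ → ℝ) : ℕ → ℝ := fun n => ∑ k ∈ range (n + 1), a k * b (n - k)

lemma Ex.congr_coeff {f : ℝ → ℝ} {a b : ℕ → ℝ} (hf : Ex f a) (h : ∀ i < 8, a i = b i) :
    Ex f b := by
  unfold Ex at *
  refine hf.congr_left fun x => ?_
  congr 1
  exact Finset.sum_congr rfl fun i hi => by rw [h i (Finset.mem_range.1 hi)]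

lemma Ex.add {f g : ℝ → ℝ} {a b : ℕ → ℝ} (hf : Ex f a) (hg : Ex g b) :
    Ex (fun h => f h + g h) (fun i => a i + b i) := by
  unfold Ex at *
  refine (IsBigO.add hf hg).congr_left fun x => ?_
  simp only [add_mul, Finset.sum_add_distrib]; ring

lemma Ex.sub {f g : ℝ → ℝ} {a b : ℕ → ℝ} (hf : Ex f a) (hg : Ex g b) :
    Ex (fun h => f h - g h) (fun i => a i - b i) := by
  unfold Ex at *
  refine (IsBigO.sub hf hg).congr_left fun x => ?_
  simp only [sub_mul, Finset.sum_sub_distrib]; ring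

lemma Ex.zero : Ex (fun _ => 0) (fun _ => 0) := by
  unfold Ex
  simpa using isBigO_zero _ _

lemma Ex.poly (a : ℕ → ℝ) : Ex (fun h => ∑ i ∈ range 8, a i * h ^ i) a := by
  unfold Ex
  simpa using isBigO_zero _ _

lemma Ex.sum {ι : Type} (s : Finset ι) (f : ι → ℝ → ℝ) (a : ι → ℕ → ℝ)
    (hf : ∀ j ∈ s, Ex (f j) (a j)) :
    Ex (fun h => ∑ j ∈ s, f j h) (fun i => ∑ j ∈ s, a j i) := by
  classical
  induction s using Finset.induction_on with
  | empty => simpa using Ex.zero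
  | insert x s hx ih =>
    simp only [Finset.sum_insert hx]
    exact (hf x (Finset.mem_insert_self _ _)).add
      (ih fun j hj => hf j (Finset.mem_insert_of_mem hj))

lemma Ex.mul {f g : ℝ → ℝ} {a b : ℕ → ℝ} (hf : Ex f a) (hg : Ex g b) :
    Ex (fun h => f h * g h) (mulc a b) := by
  unfold Ex at *
  have hb : ∀ c : ℕ → ℝ, (fun h : ℝ => ∑ i ∈ range 8, c i * h ^ i) =O[𝓝 0] fun _ => (1 : ℝ) := by
    intro c
    have hc : Continuous fun h : ℝ => ∑ i ∈ range 8, c i * h ^ i := by fun_prop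
    exact (hc.tendsto 0).isBigO_one ℝ
  have hp : (fun h : ℝ => h ^ 8) =O[𝓝 0] fun _ => (1 : ℝ) := by
    have hc : Continuous fun h : ℝ => h ^ 8 := by fun_prop
    exact (hc.tendsto 0).isBigO_one ℝ
  have hg1 : g =O[𝓝 0] fun _ => (1 : ℝ) := by
    refine ((hg.trans hp).add (hb b)).congr_left fun x => ?_
    ring
  have h1 := hf.mul hg1
  have h2 := (hb a).mul hg
  let Q : ℝ → ℝ := fun h => ∑ k ∈ range 7, (∑ i ∈ range (7 - k), a (7 - i) * b (k + 1 + i)) * h ^ k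
  have hQ : Q =O[𝓝 0] fun _ => (1 : ℝ) := by
    have hc : Continuous Q := by unfold Q; fun_prop
    exact (hc.tendsto 0).isBigO_one ℝ
  have h3 := hQ.mul (isBigO_refl (fun h : ℝ => h ^ 8) (𝓝 0))
  simp only [mul_one, one_mul] at h1 h2 h3
  refine ((h1.add h2).add h3).congr_left fun x => ?_
  simp only [Q, mulc, Finset.sum_range_succ, Finset.sum_range_zero]
  norm_num
  ring

lemma Ex.exp (c : ℝ) : Ex (fun h => Real.exp (c * h)) (fun i => c ^ i / (i.factorial : ℝ)) := by
  unfold Ex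
  have h0 : Tendsto (fun h : ℝ => c * h) (𝓝 0) (𝓝 0) := by
    have : Continuous fun h : ℝ => c * h := by fun_prop
    simpa using this.tendsto 0
  have h1 := (Real.exp_sub_sum_range_isBigO_pow 8).comp_tendsto h0
  have h2 : ((fun x : ℝ => x ^ 8) ∘ fun h => c * h) =O[𝓝 0] fun h : ℝ => h ^ 8 := by
    have := (isBigO_refl (fun h : ℝ => h ^ 8) (𝓝 0)).const_mul_left (c ^ 8)
    refine this.congr_left fun x => ?_
    simp [mul_pow]
  refine (h1.trans h2).congr_left fun x => ?_
  simp only [Function.comp]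
  congr 1
  refine Finset.sum_congr rfl fun i _ => ?_
  rw [mul_pow]; ring

/-- the factor `q^m + q^{-m} - q^j - q^{-j}` at `q = e^h`. -/
noncomputable def fac (m j h : ℝ) : ℝ :=
  Real.exp (m * h) + Real.exp (-m * h) - Real.exp (j * h) - Real.exp (-j * h)

noncomputable def facc (m j : ℝ) : ℕ → ℝ
  | 2 => m ^ 2 - j ^ 2
  | 4 => (m ^ 4 - j ^ 4) / 12
  | 6 => (m ^ 6 - j ^ 6) / 360
  | _ => 0

lemma Ex.fac (m j : ℝ) : Ex (fac m j) (facc m j) := by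
  unfold _root_.fac
  refine ((((Ex.exp m).add (Ex.exp (-m))).sub (Ex.exp j)).sub (Ex.exp (-j))).congr_coeff ?_
  intro i hi
  interval_cases i <;> simp [facc, Nat.factorial] <;> ring

noncomputable def prd (m : ℝ) (k : ℕ) (h : ℝ) : ℝ := ∏ j ∈ Finset.Icc 1 k, fac m j h

lemma prd_zero (m : ℝ) (h : ℝ) : prd m 0 h = 1 := by simp [prd]

lemma prd_succ (m : ℝ) (k : ℕ) (h : ℝ) : prd m (k + 1) h = prd m k h * fac m (k + 1 : ℕ) h := by
  unfold prd
  rw [Finset.prod_Icc_succ_top (by omega)]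

noncomputable def c0 : ℕ → ℝ
  | 0 => 1
  | _ => 0
noncomputable def c1 (m : ℝ) : ℕ → ℝ
  | 2 => m ^ 2 - 1
  | 4 => (m ^ 4 - 1) / 12
  | 6 => (m ^ 6 - 1) / 360
  | _ => 0
noncomputable def c2 (m : ℝ) : ℕ → ℝ
  | 4 => (m ^ 2 - 1) * (m ^ 2 - 4)
  | 6 => (m ^ 2 - 1) * (m ^ 4 - 16) / 12 + (m ^ 2 - 4) * (m ^ 4 - 1) / 12
  | _ => 0
noncomputable def c3 (m : ℝ) : ℕ → ℝ
  | 6 => (m ^ 2 - 1) * (m ^ 2 - 4) * (m ^ 2 - 9)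
  | _ => 0

lemma ex0 (m : ℝ) : Ex (prd m 0) c0 := by
  have h : prd m 0 = fun h => ∑ i ∈ range 8, c0 i * h ^ i := by
    funext h; simp [prd_zero, c0, Finset.sum_range_succ]
  rw [h]; exact Ex.poly _

lemma ex1 (m : ℝ) : Ex (prd m 1) (c1 m) := by
  rw [funext (prd_succ m 0)]
  refine ((ex0 m).mul (Ex.fac m _)).congr_coeff ?_
  intro i hi
  interval_cases i <;> simp [mulc, facc, c0, c1, Finset.sum_range_succ]

lemma ex2 (m : ℝ) : Ex (prd m 2) (c2 m) := by
  rw [funext (prd_succ m 1)]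
  refine ((ex1 m).mul (Ex.fac m _)).congr_coeff ?_
  intro i hi
  interval_cases i <;> simp [mulc, facc, c1, c2, Finset.sum_range_succ, -mul_eq_mul_left_iff] <;> ring

lemma ex3 (m : ℝ) : Ex (prd m 3) (c3 m) := by
  rw [funext (prd_succ m 2)]
  refine ((ex2 m).mul (Ex.fac m _)).congr_coeff ?_
  intro i hi
  interval_cases i <;> simp [mulc, facc, c2, c3, Finset.sum_range_succ, -mul_eq_mul_left_iff] <;> ring

lemma ex4 (m : ℝ) (k : ℕ) : Ex (prd m (k + 4)) (fun _ => 0) := by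
  induction k with
  | zero =>
    rw [funext (prd_succ m 3)]
    refine ((ex3 m).mul (Ex.fac m _)).congr_coeff ?_
    intro i hi
    interval_cases i <;> simp [mulc, facc, c3, Finset.sum_range_succ]
  | succ k ih =>
    rw [show k + 1 + 4 = (k + 4) + 1 by ring, funext (prd_succ m (k + 4))]
    refine (ih.mul (Ex.fac m _)).congr_coeff ?_
    intro i hi
    simp [mulc]

/-- Habiro sum at `q = e^h`. -/
noncomputable def HJ (m : ℤ) (h : ℝ) : ℝ := ∑ k ∈ range m.natAbs, prd m k h

noncomputable def HJc (m : ℝ) (i : ℕ) : ℝ := c0 i + c1 m i + c2 m i + c3 m i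

lemma prd_vanish (m : ℤ) (hm : m ≠ 0) (k : ℕ) (hk : m.natAbs ≤ k) (h : ℝ) : prd m k h = 0 := by
  unfold prd
  refine Finset.prod_eq_zero (i := m.natAbs) (Finset.mem_Icc.2 ⟨by omega, hk⟩) ?_
  unfold fac
  rcases Int.natAbs_eq m with h1 | h1
  · have h2 : ((m.natAbs : ℕ) : ℝ) = (m : ℝ) := by
      conv_rhs => rw [h1]
      simp
    rw [h2]; ring
  · have h2 : ((m.natAbs : ℕ) : ℝ) = -(m : ℝ) := by
      conv_rhs => rw [h1]
      simp
    rw [h2]; ring_nf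

lemma exHJ (m : ℤ) (hm : m ≠ 0) : Ex (HJ m) (HJc m) := by
  have h1 : HJ m = fun h => (prd m 0 h + prd m 1 h + prd m 2 h + prd m 3 h) +
      ∑ k ∈ range m.natAbs, prd m (k + 4) h := by
    funext h
    unfold HJ
    have h2 : ∑ k ∈ range m.natAbs, prd m k h = ∑ k ∈ range (m.natAbs + 4), prd m k h := by
      refine Finset.sum_subset (fun k hk => ?_) (fun k _ hk => ?_)
      · simp only [Finset.mem_range] at *; omega
      · refine prd_vanish m hm k ?_ h
        simp only [Finset.mem_range] at hk; omega
    rw [h2, Finset.sum_range_succ', Finset.sum_range_succ', Finset.sum_range_succ', Finset.sum_range_succ']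
    ring
  rw [h1]
  refine (((((ex0 m).add (ex1 m)).add (ex2 m)).add (ex3 m)).add
    (Ex.sum (range m.natAbs) (fun k => prd m (k + 4)) (fun _ _ => 0)
      (fun k _ => ex4 m k))).congr_coeff ?_
  intro i hi
  simp [HJc]

/-- coefficients of `exp (p h) - exp (r h)` -/
noncomputable def dE (p r : ℝ) (i : ℕ) : ℝ :=
  p ^ i / (i.factorial : ℝ) - r ^ i / (i.factorial : ℝ)

lemma Ex.dE (p r : ℝ) : Ex (fun h => Real.exp (p * h) - Real.exp (r * h)) (dE p r) :=
  (Ex.exp p).sub (Ex.exp r)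

noncomputable def term (u : ℤ) (h : ℝ) : ℝ :=
  (Real.exp ((39 * (u : ℝ) ^ 2 + 32 * u + 2) / 4 * h) -
    Real.exp ((39 * (u : ℝ) ^ 2 + 20 * u - 2) / 4 * h)) * HJ (3 * u + 1) h

noncomputable def termc (u : ℝ) : ℕ → ℝ :=
  mulc (dE ((39 * u ^ 2 + 32 * u + 2) / 4) ((39 * u ^ 2 + 20 * u - 2) / 4)) (HJc (3 * u + 1))

lemma exTerm (u : ℤ) : Ex (term u) (termc u) := by
  have h := exHJ (3 * u + 1) (by omega)
  push_cast at h
  exact (Ex.dE _ _).mul h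

noncomputable def Pc (n : ℝ) : ℕ → ℝ
  | 0 => 1
  | 2 => 47 - 47 * n ^ 2
  | 3 => -624 + 624 * n ^ 2
  | 4 => 151919 / 12 - 14605 * n ^ 2 + 23341 / 12 * n ^ 4
  | 5 => -294528 + 361088 * n ^ 2 - 66560 * n ^ 4
  | 6 => 2864712407 / 360 - 122607733 / 12 * n ^ 2 + 28027787 / 12 * n ^ 4
            - 27314027 / 360 * n ^ 6
  | _ => 0

noncomputable def Rc (n : ℝ) : ℕ → ℝ :=
  mulc (dE ((39 * (n ^ 2 - 1) + 2 * n) / 4) ((39 * (n ^ 2 - 1) - 2 * n) / 4)) (Pc n)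

set_option maxHeartbeats 4000000 in
lemma step (n : ℝ) (i : ℕ) (hi : i < 8) :
    Rc (n + 2) i = Rc n i + (termc (-(n + 1)) i + termc (n + 1) i) := by
  interval_cases i <;>
    simp [Rc, termc, mulc, dE, Pc, HJc, c0, c1, c2, c3, Finset.sum_range_succ, Nat.factorial] <;>
    ring

lemma base0 (i : ℕ) (hi : i < 8) : Rc 0 i = 0 := by
  interval_cases i <;>
    simp [Rc, mulc, dE, Finset.sum_range_succ]

lemma base1 (i : ℕ) (hi : i < 8) : Rc 1 i = termc 0 i := by
  interval_cases i <;>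
    simp [Rc, termc, mulc, dE, Pc, HJc, c0, c1, c2, c3, Finset.sum_range_succ, Nat.factorial] <;>
    norm_num

lemma sumR (i : ℕ) (hi : i < 8) (N : ℕ) :
    ∑ j ∈ range N, termc (2 * (j : ℝ) - (N - 1)) i = Rc N i := by
  induction N using Nat.twoStepInduction with
  | zero => simpa using (base0 i hi).symm
  | one => simpa using (base1 i hi).symm
  | more N ih _ =>
    push_cast
    rw [step N i hi, ← ih, Finset.sum_range_succ, Finset.sum_range_succ']
    have h1 : ∀ j : ℕ, (2 * ((j + 1 : ℕ) : ℝ) - ((N : ℝ) + 2 - 1)) = 2 * (j : ℝ) - (N - 1) := by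
      intro j; push_cast; ring
    simp only [h1]
    rw [add_assoc]
    congr 2
    · congr 1; push_cast; ring
    · congr 1; push_cast; ring

lemma exp_zmul (x : ℝ) (k : ℤ) : Real.exp ((k : ℝ) * x) = Real.exp x ^ k := by
  rw [mul_comm, Real.exp_mul, Real.rpow_intCast]

lemma exp_zpow' (h : ℝ) (k : ℤ) (c : ℝ) (hc : c = (k : ℝ) / 4 * h) :
    Real.exp (h / 4) ^ k = Real.exp c := by
  rw [← exp_zmul, hc]; congr 1; ring

lemma J41_eq (m : ℤ) (h : ℝ) : J41 (Real.exp (h / 4) ^ (4 : ℤ)) m = HJ m h := by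
  have h4 : Real.exp (h / 4) ^ (4 : ℤ) = Real.exp h :=
    exp_zpow' h 4 h (by push_cast; ring)
  have hz : ∀ k : ℤ, Real.exp h ^ k = Real.exp ((k : ℝ) * h) := fun k => (exp_zmul h k).symm
  rw [h4]
  unfold J41 HJ prd fac
  refine Finset.sum_congr rfl fun k _ => Finset.prod_congr rfl fun j _ => ?_
  simp only [hz]
  push_cast
  rfl

/-- Numerator of the normalized invariant. -/
noncomputable def NumK (n : ℤ) (h : ℝ) : ℝ :=
  Real.exp (-(39 * ((n : ℝ) ^ 2 - 1)) / 4 * h) *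
    ∑ j ∈ range n.toNat, term (2 * (j : ℤ) - (n - 1)) h

/-- Denominator of the normalized invariant. -/
noncomputable def DenK (n : ℤ) (h : ℝ) : ℝ :=
  Real.exp ((n : ℝ) / 2 * h) - Real.exp (-(n : ℝ) / 2 * h)

lemma JCable_eq (n : ℤ) (h : ℝ) (hh : h ≠ 0) : JCable 13 3 n h = NumK n h / DenK n h := by
  set t := Real.exp (h / 4) with ht
  have hD : t ^ (2 : ℤ) - t ^ (-2 : ℤ) ≠ 0 := by
    rw [ht, exp_zpow' h 2 (h / 2) (by push_cast; ring),
      exp_zpow' h (-2) (-(h / 2)) (by push_cast; ring), sub_ne_zero]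
    intro h1
    have := Real.exp_injective h1
    apply hh; linarith
  have hU : JtildeU t n = DenK n h / (t ^ (2 : ℤ) - t ^ (-2 : ℤ)) := by
    unfold JtildeU DenK
    congr 1
    rw [ht, exp_zpow' h (2 * n) ((n : ℝ) / 2 * h) (by push_cast; ring),
      exp_zpow' h (-(2 * n)) (-(n : ℝ) / 2 * h) (by push_cast; ring)]
  have hN : JtildeCable 13 3 t n = NumK n h / (t ^ (2 : ℤ) - t ^ (-2 : ℤ)) := by
    unfold JtildeCable NumK
    rw [mul_div_assoc, Finset.sum_div]
    congr 1
    · rw [ht]; exact exp_zpow' h _ _ (by push_cast; ring)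
    · refine Finset.sum_congr rfl fun j _ => ?_
      generalize (2 * (j : ℤ) - (n - 1)) = u
      unfold Jtilde41 term
      rw [ht, J41_eq, ← ht, div_mul_eq_mul_div, ← mul_div_assoc, ← mul_assoc]
      congr 2
      have ht0 : t ≠ 0 := (Real.exp_pos _).ne'
      rw [mul_sub, ← zpow_add₀ ht0, ← zpow_add₀ ht0, ht]
      congr 1
      · exact exp_zpow' h _ _ (by push_cast; ring)
      · exact exp_zpow' h _ _ (by push_cast; ring)
  unfold JCable
  rw [← ht, hU, hN, div_div_div_cancel_right₀ hD]

lemma exDiff (n : ℤ) (hn : 1 ≤ n) :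
    (fun h => NumK n h - DenK n h * ∑ i ∈ range 8, Pc n i * h ^ i) =O[𝓝 0] fun h : ℝ => h ^ 8 := by
  obtain ⟨N, rfl⟩ : ∃ N : ℕ, n = N := ⟨n.toNat, by omega⟩
  have h1 := Ex.sum (range N) (fun j => term (2 * (j : ℤ) - (N - 1)))
    (fun j => termc ((2 * (j : ℤ) - (N - 1) : ℤ) : ℝ)) (fun j _ => exTerm _)
  have h2 := (Ex.dE ((39 * ((N : ℝ) ^ 2 - 1) + 2 * N) / 4)
    ((39 * ((N : ℝ) ^ 2 - 1) - 2 * N) / 4)).mul (Ex.poly (Pc N))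
  have h3 := (h1.sub h2).congr_coeff (b := fun _ => 0) (by
    intro i hi
    have := sumR i hi N
    push_cast
    rw [this]
    simp [Rc])
  unfold Ex at h3
  simp only [zero_mul, Finset.sum_const_zero, sub_zero] at h3
  have hc : Continuous fun h : ℝ => Real.exp (-(39 * ((N : ℝ) ^ 2 - 1)) / 4 * h) := by fun_prop
  have h4 := ((hc.tendsto 0).isBigO_one ℝ).mul h3
  simp only [one_mul] at h4
  refine h4.congr_left fun x => ?_
  unfold NumK DenK
  simp only [Int.toNat_natCast, Int.cast_natCast]
  rw [mul_sub, ← mul_assoc]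
  congr 2
  rw [mul_sub (Real.exp _), ← Real.exp_add, ← Real.exp_add]
  congr 2 <;> ring

lemma an_exp (c : ℝ) : AnalyticAt ℝ (fun h : ℝ => Real.exp (c * h)) 0 :=
  (analyticAt_const.mul analyticAt_id).rexp

lemma an_fac (m j : ℝ) : AnalyticAt ℝ (fac m j) 0 :=
  (((an_exp m).add (an_exp (-m))).sub (an_exp j)).sub (an_exp (-j))

lemma an_HJ (m : ℤ) : AnalyticAt ℝ (HJ m) 0 := by
  unfold HJ prd
  exact Finset.analyticAt_fun_sum _ fun k _ => Finset.analyticAt_fun_prod _ fun j _ => an_fac _ _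

lemma an_NumK (n : ℤ) : AnalyticAt ℝ (NumK n) 0 := by
  unfold NumK term
  exact (an_exp _).mul (Finset.analyticAt_fun_sum _ fun j _ =>
    ((an_exp _).sub (an_exp _)).mul (an_HJ _))

lemma an_Den (n : ℤ) : AnalyticAt ℝ (DenK n) 0 := (an_exp _).sub (an_exp _)

lemma an_dslope (f : ℝ → ℝ) (hf : AnalyticAt ℝ f 0) : AnalyticAt ℝ (dslope f 0) 0 := by
  obtain ⟨p, hp⟩ := hf
  exact ⟨_, hp.has_fpower_series_dslope_fslope⟩

lemma div_bigO (H : ℝ → ℝ) (hH : ContinuousAt H 0)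
    (h8 : (fun h => h * H h) =O[𝓝 0] fun h : ℝ => h ^ 8) : H =O[𝓝 0] fun h : ℝ => h ^ 7 := by
  obtain ⟨C, hC⟩ := h8.bound
  have h1 : ∀ᶠ h in 𝓝[≠] (0 : ℝ), |H h| ≤ C * |h ^ 7| := by
    filter_upwards [nhdsWithin_le_nhds hC, self_mem_nhdsWithin] with h hh h0
    have hp : 0 < |h| := abs_pos.2 h0
    simp only [Real.norm_eq_abs, abs_mul, abs_pow] at hh ⊢
    have : |h| * |H h| ≤ |h| * (C * |h| ^ 7) := by linarith [hh]
    exact le_of_mul_le_mul_left this hp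
  have hz : |H 0| ≤ C * |(0 : ℝ) ^ 7| := by
    have hc : ContinuousAt (fun h : ℝ => C * |h ^ 7|) 0 := by fun_prop
    exact le_of_tendsto_of_tendsto (hH.abs.tendsto.mono_left nhdsWithin_le_nhds)
      (hc.tendsto.mono_left nhdsWithin_le_nhds) h1
  refine IsBigO.of_bound C ?_
  have h2 := eventually_nhdsWithin_iff.1 h1
  filter_upwards [h2] with h hh
  simp only [Real.norm_eq_abs]
  by_cases h0 : h = 0
  · subst h0; exact hz
  · exact hh h0

/-- For `K = C_{(13,3)}(4₁)` and every integer `n ≥ 1`, the function `ℏ ↦ J_{K,n}(e^ℏ)`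
(defined for small `ℏ ≠ 0` by the quotient `J̃_{K,n}(e^{ℏ/4})/J̃_{U,n}(e^{ℏ/4})` and extended
real-analytically across `ℏ = 0`) has Taylor expansion at `ℏ = 0` given by
`1 + (47 − 47n²)ℏ² + (−624 + 624n²)ℏ³ + (151919/12 − 14605n² + (23341/12)n⁴)ℏ⁴
 + (−294528 + 361088n² − 66560n⁴)ℏ⁵
 + (2864712407/360 − (122607733/12)n² + (28027787/12)n⁴ − (27314027/360)n⁶)ℏ⁶ + O(ℏ⁷)`. -/
theorem hbar_expansion_cable_13_3 (n : ℤ) (hn : 1 ≤ n) :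
    ∃ g : ℝ → ℝ, AnalyticAt ℝ g 0 ∧
      (∀ᶠ h in nhdsWithin (0 : ℝ) {0}ᶜ, g h = JCable 13 3 n h) ∧
      (fun h : ℝ => g h -
        (1 + (47 - 47 * (n : ℝ) ^ 2) * h ^ 2 + (-624 + 624 * (n : ℝ) ^ 2) * h ^ 3
          + (151919 / 12 - 14605 * (n : ℝ) ^ 2 + 23341 / 12 * (n : ℝ) ^ 4) * h ^ 4
          + (-294528 + 361088 * (n : ℝ) ^ 2 - 66560 * (n : ℝ) ^ 4) * h ^ 5
          + (2864712407 / 360 - 122607733 / 12 * (n : ℝ) ^ 2 + 28027787 / 12 * (n : ℝ) ^ 4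
            - 27314027 / 360 * (n : ℝ) ^ 6) * h ^ 6))
        =O[nhds (0 : ℝ)] (fun h => h ^ 7) := by
  have hn0 : (n : ℝ) ≠ 0 := by
    have : n ≠ 0 := by omega
    exact_mod_cast this
  have hD0 : DenK n 0 = 0 := by simp [DenK]
  have hdiff := exDiff n hn
  have hN0 : NumK n 0 = 0 := by
    obtain ⟨C, hC⟩ := hdiff.bound
    have := hC.self_of_nhds
    simpa [hD0] using this
  have aN := an_dslope _ (an_NumK n)
  have aD := an_dslope _ (an_Den n)
  have hd : dslope (DenK n) 0 0 ≠ 0 := by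
    have h1 : HasDerivAt (DenK n) n 0 := by
      have e : ∀ c : ℝ, HasDerivAt (fun h : ℝ => Real.exp (c * h)) c 0 := by
        intro c
        simpa using ((hasDerivAt_id (0 : ℝ)).const_mul c).exp
      have := (e ((n : ℝ) / 2)).sub (e (-(n : ℝ) / 2))
      exact this.congr_deriv (by ring)
    rw [dslope_same, h1.deriv]
    exact hn0
  have eN : ∀ h, NumK n h = h * dslope (NumK n) 0 h := by
    intro h
    have := sub_smul_dslope (NumK n) 0 h
    simp only [sub_zero, smul_eq_mul, hN0] at this
    exact this.symm
  have eD : ∀ h, DenK n h = h * dslope (DenK n) 0 h := by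
    intro h
    have := sub_smul_dslope (DenK n) 0 h
    simp only [sub_zero, smul_eq_mul, hD0] at this
    exact this.symm
  refine ⟨fun h => dslope (NumK n) 0 h / dslope (DenK n) 0 h, aN.fun_div aD hd, ?_, ?_⟩
  · filter_upwards [self_mem_nhdsWithin] with h hh
    rw [JCable_eq n h hh, eN h, eD h, mul_div_mul_left _ _ hh]
  · have hP : Continuous fun h : ℝ => ∑ i ∈ range 8, Pc n i * h ^ i := by fun_prop
    have h7 := div_bigO (fun h => dslope (NumK n) 0 h -
        dslope (DenK n) 0 h * ∑ i ∈ range 8, Pc n i * h ^ i)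
      (aN.continuousAt.sub (aD.continuousAt.mul hP.continuousAt))
      (hdiff.congr_left fun h => by rw [eN h, eD h]; ring)
    have hinv : (fun h => (dslope (DenK n) 0 h)⁻¹) =O[𝓝 0] fun _ => (1 : ℝ) :=
      (aD.continuousAt.inv₀ hd).tendsto.isBigO_one ℝ
    have h9 := h7.mul hinv
    simp only [mul_one] at h9
    refine h9.congr' ?_ (EventuallyEq.refl _ _)
    filter_upwards [aD.continuousAt.eventually_ne hd] with h hh
    simp only [Finset.sum_range_succ, Finset.sum_range_zero, Pc]
    field_simp
    ring
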